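/- Let S and S' be two distinct seed trees of the same size k ≥ 4, and let τ be a minimal tree that is not (S,S')-blind, i.e. τ is not (S,S')-blind but every proper subtree of τ is (S,S')-blind. Then for every decoration ℓ of τ and every n ≥ k: E[F_τ(T_n^S)] − E[F_τ(T_n^{S'})] = E[F_τ(T_n^S, {·} ⊆ S)] − E[F_τ(T_n^{S'}, {·} ⊆ S')], where F_τ(T_n^S, {·} ⊆ S) = Σ_{φ: τ ↪ S} ∏_{u∈τ} [deg_{T_n^S}(φ(u)) − 1]_{ℓ(u)}, the sum being over graph embeddings of τ into the seed S (with degrees measured in T_n^S). -/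

import Mathlib

/-!
Write `F_τ(T)` as the sum over subsets `A` of the vertices of `τ` of the contribution
`obsTrace A` of the embeddings `φ` that send exactly the vertices of `A` into the seed. For `A`
the whole vertex set this contribution is `obsInSeed`, so it has to be shown that every other
`A` contributes the same expectation for both seeds.

* A graph grown from the seed only acquires pending trees, so the seed is convex in it
  (`Grown`). Hence only sets `A` that are empty or induce a subtree of `τ` contribute
  (`HasTrace.isTree`), and these are blind, by minimality of `τ` or trivially.
* For such an `A`, blindness gives a degree-preserving bijection between the embeddings of `τ|_A`
  in `S` and in `S'` (`exists_equiv_of_isBlind`). It remains to compare, for `ψ` and its image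
  `ψ'`, the expected contributions of the embeddings of `τ` extending `ψ` and `ψ'` to new
  vertices.
* These contributions depend only on the graph seen from the image of `ψ` and the new vertices:
  their mutual adjacencies and their degrees. This partial information evolves as a Markov chain
  whose transitions do not involve the rest of the seed, because the attachment probability of
  each tracked vertex depends only on its degree, and the remaining mass goes to an untracked
  vertex, whichever it is. This lumpability is expressed by the relation `Matched` between the two
  graphs and by `Matched.step`, and integrated in `integral_eq_of_matched`.
-/

open MeasureTheory Filter Asymptotics

noncomputable section

namespace AffinePA

instance (V : Type*) : MeasurableSpace (SimpleGraph V) := ⊤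

/-- The degree of a vertex. -/
def degR {V : Type*} (G : SimpleGraph V) (v : V) : ℕ := Nat.card {w // G.Adj v w}

/-- The tree on `n+1` vertices obtained from `G` by attaching the new vertex to `u`. -/
def extendTree {n : ℕ} (G : SimpleGraph (Fin n)) (u : Fin n) : SimpleGraph (Fin (n + 1)) :=
  SimpleGraph.fromRel fun a b =>
    (∃ a' b' : Fin n, a = Fin.castSucc a' ∧ b = Fin.castSucc b' ∧ G.Adj a' b') ∨
      (a = Fin.castSucc u ∧ b = Fin.last n)

/-- One step of the affine preferential attachment dynamics. -/
def stepMeasure (α : ℝ) {n : ℕ} (G : SimpleGraph (Fin n)) :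
    Measure (SimpleGraph (Fin (n + 1))) :=
  ∑ u : Fin n,
    ENNReal.ofReal (((degR G u : ℝ) - 1 + α) / ((1 + α) * (n : ℝ) - 2)) •
      Measure.dirac (extendTree G u)

/-- The law of the α-PA tree with `m` added vertices, started from the seed `S`. -/
def paLaw (α : ℝ) {k : ℕ} (S : SimpleGraph (Fin k)) :
    (m : ℕ) → Measure (SimpleGraph (Fin (k + m)))
  | 0 => Measure.dirac S
  | m + 1 => (paLaw α S m).bind (stepMeasure α)

/-- The weight `∏_u [deg_T(f u) - 1]_{ℓ u}` of a map `f`. -/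
def embWeight {V W : Type*} [Fintype V] (T : SimpleGraph W) (ℓ : V → ℕ) (f : V → W) : ℝ :=
  ∏ u : V, ((degR T (f u) - 1).descFactorial (ℓ u) : ℝ)

/-- The observable `F_{(τ,ℓ)}(T)`. -/
def obsG {V W : Type*} [Fintype V] (τ : SimpleGraph V) (ℓ : V → ℕ) (T : SimpleGraph W) : ℝ :=
  ∑ᶠ φ : τ ↪g T, embWeight T ℓ ⇑φ

/-- The weight `w(τ,ℓ)` of a decorated tree. -/
def weightG {V : Type*} [Fintype V] (τ : SimpleGraph V) (ℓ : V → ℕ) : ℕ :=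
  if Fintype.card V ≤ 2 ∧ ∀ v, ℓ v = 0 then 1
  else (∑ v, ℓ v) + Nat.card {v // degR τ v = 1 ∧ ℓ v = 0}

/-- A decorated tree: a finite graph on `Fin n` with nonnegative integer decorations. -/
structure DecTree where
  n : ℕ
  tree : SimpleGraph (Fin n)
  dec : Fin n → ℕ

def DecTree.wt (τ : DecTree) : ℕ := weightG τ.tree τ.dec

def DecTree.decSum (τ : DecTree) : ℕ := ∑ v, τ.dec v

def DecTree.obs (τ : DecTree) {W : Type*} (T : SimpleGraph W) : ℝ := obsG τ.tree τ.dec T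

/-- The strict partial order `≺` on decorated trees. -/
def DecLt (σ τ : DecTree) : Prop :=
  (σ.wt < τ.wt ∧ σ.n ≤ τ.n) ∨ (σ.wt = τ.wt ∧ σ.n < τ.n) ∨
    (σ.wt = τ.wt ∧ σ.n = τ.n ∧ σ.decSum < τ.decSum)

open Classical in
/-- `F_{τ+τ}(T)`: sum over pairs of embeddings with overlapping images. -/
def obsOverlapG {V W : Type*} [Fintype V] (τ : SimpleGraph V) (ℓ : V → ℕ)
    (T : SimpleGraph W) : ℝ :=
  ∑ᶠ (φ₁ : τ ↪g T) (φ₂ : τ ↪g T),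
    if (Set.range ⇑φ₁ ∩ Set.range ⇑φ₂).Nonempty then
      embWeight T ℓ ⇑φ₁ * embWeight T ℓ ⇑φ₂
    else 0

open Classical in
/-- `F_{τ,σ}(T)`: sum over pairs of embeddings with disjoint images. -/
def obsDisjG {V₁ V₂ W : Type*} [Fintype V₁] [Fintype V₂] (τ : SimpleGraph V₁) (ℓτ : V₁ → ℕ)
    (σ : SimpleGraph V₂) (ℓσ : V₂ → ℕ) (T : SimpleGraph W) : ℝ :=
  ∑ᶠ (φ₁ : τ ↪g T) (φ₂ : σ ↪g T),
    if Disjoint (Set.range ⇑φ₁) (Set.range ⇑φ₂) then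
      embWeight T ℓτ ⇑φ₁ * embWeight T ℓσ ⇑φ₂
    else 0

/-- `f ≈ g` : same order of magnitude, eventually. -/
def asympEquiv (f g : ℕ → ℝ) : Prop :=
  ∃ C : ℝ, 0 < C ∧ ∀ᶠ n in atTop, f n ≤ C * g n ∧ g n ≤ C * f n

/-- Descending factorial `[x]_l` of a real number. -/
def descPoch (x : ℝ) (l : ℕ) : ℝ := ∏ i ∈ Finset.range l, (x - (i : ℝ))

/-- Total variation distance between two measures. -/
def tvDist {X : Type*} [MeasurableSpace X] (μ ν : Measure X) : ℝ :=
  ⨆ s : {s : Set X // MeasurableSet s}, |(μ ↑s).toReal - (ν ↑s).toReal|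

open Classical in
/-- The contribution to `F_τ` of embeddings whose image meets the seed. -/
def obsMeetSeed (k m : ℕ) {r : ℕ} (τ : SimpleGraph (Fin r)) (ℓ : Fin r → ℕ)
    (T : SimpleGraph (Fin (k + m))) : ℝ :=
  ∑ᶠ φ : τ ↪g T,
    if ∃ (x : Fin r) (y : Fin k), φ x = Fin.castAdd m y then embWeight T ℓ ⇑φ else 0

/-- The contribution to `F_τ` of embeddings contained in the seed. -/
def obsInSeed (k m : ℕ) {r : ℕ} (τ : SimpleGraph (Fin r)) (ℓ : Fin r → ℕ)
    (S : SimpleGraph (Fin k)) (T : SimpleGraph (Fin (k + m))) : ℝ :=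
  ∑ᶠ φ : τ ↪g S, embWeight T ℓ fun u => Fin.castAdd m (φ u)

/-- `D_{τ,d}(T)`: the number of perfect embeddings of `(τ,d)` in `T`. -/
def perfCount {V W : Type*} (τ : SimpleGraph V) (d : V → ℕ) (T : SimpleGraph W) : ℕ :=
  Nat.card {φ : τ ↪g T // ∀ u, degR T (φ u) = d u}

/-- `τ` is `(T₁,T₂)`-blind. -/
def IsBlind {V W₁ W₂ : Type*} (τ : SimpleGraph V) (T₁ : SimpleGraph W₁)
    (T₂ : SimpleGraph W₂) : Prop :=
  ∀ d : V → ℕ, (∀ u, 1 ≤ d u) → perfCount τ d T₁ = perfCount τ d T₂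

/-- `D_{σ,τ,d}(T)`: perfect embeddings of `(τ,d)` meeting the seed exactly in `φ(A)`. -/
def perfCountSeed (k m : ℕ) {r : ℕ} (τ : SimpleGraph (Fin r)) (A : Finset (Fin r))
    (d : Fin r → ℕ) (T : SimpleGraph (Fin (k + m))) : ℕ :=
  Nat.card {φ : τ ↪g T //
    (∀ u, degR T (φ u) = d u) ∧ ∀ u : Fin r, (∃ y : Fin k, φ u = Fin.castAdd m y) ↔ u ∈ A}

/-- The σ-algebra generated by `T_0, …, T_m`. -/
def natFilt {Ω : Type*} [MeasurableSpace Ω] {k : ℕ}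
    (T : (m : ℕ) → Ω → SimpleGraph (Fin (k + m))) (m : ℕ) : MeasurableSpace Ω :=
  ⨆ j ∈ Set.Iic m, MeasurableSpace.comap (T j) inferInstance

/-- `(T_m)` is an α-PA chain started from the seed `S`, on the probability space `(Ω,P)`. -/
structure IsPAChain (α : ℝ) {k : ℕ} (S : SimpleGraph (Fin k)) {Ω : Type*} [MeasurableSpace Ω]
    (P : Measure Ω) (T : (m : ℕ) → Ω → SimpleGraph (Fin (k + m))) : Prop where
  isProb : IsProbabilityMeasure P
  meas : ∀ m, Measurable (T m)
  init : ∀ᵐ ω ∂P, T 0 ω = S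
  step : ∀ (m : ℕ) (f : SimpleGraph (Fin (k + (m + 1))) → ℝ),
    P[(fun ω => f (T (m + 1) ω))|natFilt T m] =ᵐ[P]
      fun ω => ∫ G, f G ∂stepMeasure α (T m ω)

/-- The natural filtration of the chain. -/
def natFiltration {Ω : Type*} [mΩ : MeasurableSpace Ω] {k : ℕ}
    (T : (m : ℕ) → Ω → SimpleGraph (Fin (k + m))) (hT : ∀ m, Measurable (T m)) :
    Filtration ℕ mΩ where
  seq := natFilt T
  mono' _ _ hij := biSup_mono fun _ hx => le_trans hx hij
  le' _ := iSup_le fun l => iSup_le fun _ => (hT l).comap_le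

/-- Isomorphism of simple graphs as a setoid. -/
def isoSetoid (n : ℕ) : Setoid (SimpleGraph (Fin n)) where
  r G H := Nonempty (G ≃g H)
  iseqv := ⟨fun G => ⟨RelIso.refl G.Adj⟩, fun ⟨e⟩ => ⟨e.symm⟩, fun ⟨e⟩ ⟨f⟩ => ⟨e.trans f⟩⟩

/-- Isomorphism classes of graphs on `n` vertices. -/
def IsoClass (n : ℕ) : Type := Quotient (isoSetoid n)

instance (n : ℕ) : MeasurableSpace (IsoClass n) := ⊤

/-- The law of the isomorphism class of the α-PA tree with `n` vertices grown from `S`. -/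
def isoClassLaw (α : ℝ) {k : ℕ} (S : SimpleGraph (Fin k)) (n : ℕ) : Measure (IsoClass n) :=
  if h : k ≤ n then
    (paLaw α S (n - k)).map fun G =>
      Quotient.mk (isoSetoid n) (G.map (finCongr (Nat.add_sub_cancel' h)).toEmbedding)
  else 0

/-! ### Integration against the law of the chain -/

instance (V : Type*) : DiscreteMeasurableSpace (SimpleGraph V) := ⟨fun _ => trivial⟩

lemma measurable_stepMeasure (α : ℝ) {n : ℕ} :
    Measurable (stepMeasure α : SimpleGraph (Fin n) → Measure (SimpleGraph (Fin (n + 1)))) :=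
  Measurable.of_discrete

instance isFiniteMeasure_stepMeasure (α : ℝ) {n : ℕ} (G : SimpleGraph (Fin n)) :
    IsFiniteMeasure (stepMeasure α G) := by
  refine ⟨?_⟩
  simp only [stepMeasure, Measure.coe_finsetSum, Finset.sum_apply, Measure.smul_apply,
    measure_univ, smul_eq_mul, mul_one]
  exact ENNReal.sum_lt_top.2 fun _ _ => ENNReal.ofReal_lt_top

instance isFiniteMeasure_paLaw (α : ℝ) {k : ℕ} (S : SimpleGraph (Fin k)) (m : ℕ) :
    IsFiniteMeasure (paLaw α S m) := by
  classical
  induction m with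
  | zero => exact inferInstanceAs (IsFiniteMeasure (Measure.dirac S))
  | succ m ih =>
    let _ : Fintype (SimpleGraph (Fin (k + m))) := Fintype.ofFinite _
    refine ⟨?_⟩
    change ((paLaw α S m).bind (stepMeasure α)) Set.univ < ⊤
    rw [Measure.bind_apply MeasurableSet.univ (measurable_stepMeasure α).aemeasurable,
      lintegral_fintype]
    exact ENNReal.sum_lt_top.2 fun G _ => ENNReal.mul_lt_top (measure_lt_top _ _)
      (measure_lt_top _ _)

/-- The transition probability from `G` to `extendTree G u`, as it enters `stepMeasure`
(a negative quotient is truncated to `0`). -/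
def stepProb (α : ℝ) {n : ℕ} (G : SimpleGraph (Fin n)) (u : Fin n) : ℝ :=
  (ENNReal.ofReal (((degR G u : ℝ) - 1 + α) / ((1 + α) * (n : ℝ) - 2))).toReal

lemma integral_stepMeasure (α : ℝ) {n : ℕ} (G : SimpleGraph (Fin n))
    (f : SimpleGraph (Fin (n + 1)) → ℝ) :
    ∫ H, f H ∂stepMeasure α G = ∑ u, stepProb α G u * f (extendTree G u) := by
  rw [stepMeasure, integral_finsetSum_measure]
  · refine Finset.sum_congr rfl fun u _ => ?_
    rw [integral_smul_measure, integral_dirac, smul_eq_mul, stepProb]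
  · intro u _
    exact Integrable.smul_measure Integrable.of_finite ENNReal.ofReal_ne_top

lemma integral_paLaw_zero (α : ℝ) {k : ℕ} (S : SimpleGraph (Fin k))
    (f : SimpleGraph (Fin (k + 0)) → ℝ) : ∫ G, f G ∂paLaw α S 0 = f S :=
  integral_dirac f S

lemma integral_paLaw_succ (α : ℝ) {k : ℕ} (S : SimpleGraph (Fin k)) (m : ℕ)
    (f : SimpleGraph (Fin (k + (m + 1))) → ℝ) :
    ∫ G, f G ∂paLaw α S (m + 1) =
      ∫ G, ∑ u, stepProb α G u * f (extendTree G u) ∂paLaw α S m := by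
  classical
  let _ : Fintype (SimpleGraph (Fin (k + m))) := Fintype.ofFinite _
  let _ : Fintype (SimpleGraph (Fin (k + (m + 1)))) := Fintype.ofFinite _
  have hE : ∀ G : SimpleGraph (Fin (k + m)), ∑ u, stepProb α G u * f (extendTree G u) =
      ∑ H : SimpleGraph (Fin (k + (m + 1))), (stepMeasure α G).real {H} * f H := by
    intro G
    rw [← integral_stepMeasure, integral_fintype Integrable.of_finite]
    rfl
  have hB : ∀ H : SimpleGraph (Fin (k + (m + 1))), (paLaw α S (m + 1)).real {H} =
      ∑ G, (paLaw α S m).real {G} * (stepMeasure α G).real {H} := by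
    intro H
    change (((paLaw α S m).bind (stepMeasure α)) {H}).toReal = _
    rw [Measure.bind_apply (measurableSet_singleton H) (measurable_stepMeasure α).aemeasurable,
      lintegral_fintype, ENNReal.toReal_sum]
    · refine Finset.sum_congr rfl fun G _ => ?_
      rw [ENNReal.toReal_mul, mul_comm]
      rfl
    · intro G _
      exact ENNReal.mul_ne_top (measure_ne_top _ _) (measure_ne_top _ _)
  rw [integral_fintype Integrable.of_finite, integral_fintype Integrable.of_finite]
  simp only [hE, hB, smul_eq_mul, Finset.sum_mul, Finset.mul_sum]
  rw [Finset.sum_comm]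
  refine Finset.sum_congr rfl fun G _ => Finset.sum_congr rfl fun H _ => by ring

/-! ### Degrees and adjacency after one attachment step -/

section Extend

variable {n : ℕ} (G : SimpleGraph (Fin n)) (u : Fin n)

@[simp] lemma extendTree_castSucc_castSucc (a b : Fin n) :
    (extendTree G u).Adj a.castSucc b.castSucc ↔ G.Adj a b := by
  simp only [extendTree, SimpleGraph.fromRel_adj, ne_eq, Fin.castSucc_inj,
    (Fin.castSucc_lt_last _).ne, and_false, or_false]
  constructor
  · rintro ⟨_, ⟨a', b', rfl, rfl, h⟩ | ⟨a', b', rfl, rfl, h⟩⟩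
    exacts [h, h.symm]
  · exact fun h => ⟨h.ne, Or.inl ⟨a, b, rfl, rfl, h⟩⟩

@[simp] lemma extendTree_castSucc_last (a : Fin n) :
    (extendTree G u).Adj a.castSucc (Fin.last n) ↔ a = u := by
  simp only [extendTree, SimpleGraph.fromRel_adj, ne_eq, (Fin.castSucc_lt_last _).ne,
    (Fin.castSucc_lt_last _).ne', Fin.castSucc_inj]
  simp

@[simp] lemma extendTree_last_castSucc (a : Fin n) :
    (extendTree G u).Adj (Fin.last n) a.castSucc ↔ a = u := by
  rw [SimpleGraph.adj_comm, extendTree_castSucc_last]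

open Classical in
lemma degR_eq_sum {V : Type*} [Fintype V] (H : SimpleGraph V) (v : V) :
    degR H v = ∑ w, if H.Adj v w then 1 else 0 := by
  rw [degR, Nat.card_eq_fintype_card, Fintype.card_subtype, Finset.card_filter]

lemma degR_eq_degree {V : Type*} [Fintype V] (H : SimpleGraph V) (v : V)
    [Fintype (H.neighborSet v)] : degR H v = H.degree v := by
  rw [degR, ← SimpleGraph.card_neighborSet_eq_degree, ← Nat.card_eq_fintype_card]
  rfl

lemma degR_extendTree_castSucc (a : Fin n) :
    degR (extendTree G u) a.castSucc = degR G a + if a = u then 1 else 0 := by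
  classical
  rw [degR_eq_sum, Fin.sum_univ_castSucc, degR_eq_sum]
  simp only [extendTree_castSucc_castSucc, extendTree_castSucc_last]

lemma degR_extendTree_last : degR (extendTree G u) (Fin.last n) = 1 := by
  classical
  rw [degR_eq_sum, Fin.sum_univ_castSucc]
  simp only [extendTree_last_castSucc, SimpleGraph.irrefl]
  simp

end Extend

/-! ### Lumping: the chain seen from a set of vertices -/

/-- The extension of a permutation of `Fin n` by fixing the new vertex. -/
def succPerm {n : ℕ} (β : Equiv.Perm (Fin n)) : Equiv.Perm (Fin (n + 1)) where
  toFun := Fin.lastCases (Fin.last n) fun i => (β i).castSucc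
  invFun := Fin.lastCases (Fin.last n) fun i => (β.symm i).castSucc
  left_inv x := by refine Fin.lastCases ?_ (fun i => ?_) x <;> simp
  right_inv x := by refine Fin.lastCases ?_ (fun i => ?_) x <;> simp

@[simp] lemma succPerm_castSucc {n : ℕ} (β : Equiv.Perm (Fin n)) (i : Fin n) :
    succPerm β i.castSucc = (β i).castSucc := by simp [succPerm]

@[simp] lemma succPerm_last {n : ℕ} (β : Equiv.Perm (Fin n)) :
    succPerm β (Fin.last n) = Fin.last n := by simp [succPerm]

/-- The set of tracked vertices after one step: the old ones and the new vertex. -/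
def succSet {n : ℕ} (M : Set (Fin n)) : Set (Fin (n + 1)) :=
  {x | ∀ y : Fin n, x = y.castSucc → y ∈ M}

@[simp] lemma castSucc_mem_succSet {n : ℕ} {M : Set (Fin n)} {y : Fin n} :
    y.castSucc ∈ succSet M ↔ y ∈ M := by
  simp [succSet]

@[simp] lemma last_mem_succSet {n : ℕ} {M : Set (Fin n)} : Fin.last n ∈ succSet M :=
  fun y hy => (Fin.castSucc_lt_last y).ne' hy |>.elim

/-- `G` and `G'` look the same from the tracked vertices `M` (identified with `β '' M`): the
permutation `β` preserves adjacency inside `M` and the degrees of the vertices of `M`, and the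
total degrees agree. Nothing is required of the adjacencies and degrees of the individual
untracked vertices, apart from their positive degrees. -/
structure Matched {n : ℕ} (β : Equiv.Perm (Fin n)) (M : Set (Fin n))
    (G G' : SimpleGraph (Fin n)) : Prop where
  adj : ∀ x ∈ M, ∀ y ∈ M, G'.Adj (β x) (β y) ↔ G.Adj x y
  deg : ∀ x ∈ M, degR G' (β x) = degR G x
  sum : ∑ x, degR G' x = ∑ x, degR G x
  pos : ∀ x, 1 ≤ degR G x
  pos' : ∀ x, 1 ≤ degR G' x

lemma Matched.symm {n : ℕ} {β : Equiv.Perm (Fin n)} {M : Set (Fin n)}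
    {G G' : SimpleGraph (Fin n)} (h : Matched β M G G') : Matched β.symm (β '' M) G' G where
  adj := by
    rintro _ ⟨x, hx, rfl⟩ _ ⟨y, hy, rfl⟩
    simpa using (h.adj x hx y hy).symm
  deg := by
    rintro _ ⟨x, hx, rfl⟩
    simpa using (h.deg x hx).symm
  sum := h.sum.symm
  pos := h.pos'
  pos' := h.pos

lemma sum_degR_extendTree {n : ℕ} (G : SimpleGraph (Fin n)) (u : Fin n) :
    ∑ x, degR (extendTree G u) x = ∑ x, degR G x + 2 := by
  rw [Fin.sum_univ_castSucc, degR_extendTree_last]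
  simp [degR_extendTree_castSucc, Finset.sum_add_distrib]

lemma one_le_degR_extendTree {n : ℕ} {G : SimpleGraph (Fin n)} (h : ∀ x, 1 ≤ degR G x)
    (u : Fin n) (x : Fin (n + 1)) : 1 ≤ degR (extendTree G u) x := by
  refine Fin.lastCases ?_ (fun i => ?_) x
  · rw [degR_extendTree_last]
  · rw [degR_extendTree_castSucc]
    exact (h i).trans (Nat.le_add_right _ _)

/-- The relation is preserved when the two attachment points correspond to each other, and
also when both are untracked. -/
lemma Matched.extend {n : ℕ} {β : Equiv.Perm (Fin n)} {M : Set (Fin n)}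
    {G G' : SimpleGraph (Fin n)} (h : Matched β M G G') {u w : Fin n}
    (huw : u = w ∨ (u ∉ M ∧ w ∉ M)) :
    Matched (succPerm β) (succSet M) (extendTree G u) (extendTree G' (β w)) := by
  have key : ∀ x ∈ M, (x = w ↔ x = u) := by
    rintro x hx
    rcases huw with rfl | ⟨hu, hw⟩
    · rfl
    · exact ⟨fun e => absurd (e ▸ hx) hw, fun e => absurd (e ▸ hx) hu⟩
  refine ⟨?_, ?_, ?_, one_le_degR_extendTree h.pos u, one_le_degR_extendTree h.pos' _⟩
  · intro x
    refine Fin.lastCases ?_ (fun i => ?_) x <;> intro hx y <;>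
      refine Fin.lastCases ?_ (fun j => ?_) y <;> intro hy
    · simp
    · simpa using key j (castSucc_mem_succSet.1 hy)
    · simpa using key i (castSucc_mem_succSet.1 hx)
    · simpa using h.adj i (castSucc_mem_succSet.1 hx) j (castSucc_mem_succSet.1 hy)
  · intro x
    refine Fin.lastCases ?_ (fun i => ?_) x <;> intro hx
    · simp [degR_extendTree_last]
    · rw [castSucc_mem_succSet] at hx
      simp only [succPerm_castSucc, degR_extendTree_castSucc, h.deg i hx, β.injective.eq_iff,
        key i hx]
  · rw [sum_degR_extendTree, sum_degR_extendTree, h.sum]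

lemma stepProb_eq {α : ℝ} (hα : 0 < α) {n : ℕ} (hn : 4 ≤ n) {G : SimpleGraph (Fin n)}
    (hG : ∀ x, 1 ≤ degR G x) (u : Fin n) :
    stepProb α G u = ((degR G u : ℝ) - 1 + α) / ((1 + α) * (n : ℝ) - 2) := by
  rw [stepProb, ENNReal.toReal_ofReal]
  have h1 : (1 : ℝ) ≤ degR G u := by exact_mod_cast hG u
  have h2 : (4 : ℝ) ≤ n := by exact_mod_cast hn
  exact div_nonneg (by linarith) (by nlinarith)

/-- Lumpability: one step of the chain maps functions that agree on matched graphs to functions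
that agree on matched graphs. -/
lemma Matched.step {α : ℝ} (hα : 0 < α) {n : ℕ} (hn : 4 ≤ n) {β : Equiv.Perm (Fin n)}
    {M : Set (Fin n)} {f f' : SimpleGraph (Fin (n + 1)) → ℝ}
    (hf : ∀ H H', Matched (succPerm β) (succSet M) H H' → f H = f' H')
    {G G' : SimpleGraph (Fin n)} (h : Matched β M G G') :
    ∑ u, stepProb α G u * f (extendTree G u) =
      ∑ u, stepProb α G' u * f' (extendTree G' u) := by
  classical
  rw [← Equiv.sum_comp β fun u => stepProb α G' u * f' (extendTree G' u)]
  have h1 : ∀ u, f' (extendTree G' (β u)) = f (extendTree G u) := fun u =>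
    (hf _ _ (h.extend (Or.inl rfl))).symm
  simp only [h1]
  rw [← sub_eq_zero, ← Finset.sum_sub_distrib]
  simp only [← sub_mul]
  have h0 : ∀ u ∈ M, stepProb α G u - stepProb α G' (β u) = 0 := by
    intro u hu
    rw [stepProb_eq hα hn h.pos, stepProb_eq hα hn h.pos', h.deg u hu, sub_self]
  have hs : ∑ u, (stepProb α G u - stepProb α G' (β u)) = 0 := by
    rw [Finset.sum_sub_distrib, Equiv.sum_comp β (stepProb α G')]
    have hsum : ∑ x, (degR G' x : ℝ) = ∑ x, (degR G x : ℝ) := by exact_mod_cast h.sum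
    simp only [stepProb_eq hα hn h.pos, stepProb_eq hα hn h.pos', ← Finset.sum_div,
      Finset.sum_add_distrib, Finset.sum_sub_distrib, hsum, sub_self]
  by_cases hM : ∃ w, w ∉ M
  · obtain ⟨w, hw⟩ := hM
    have h2 : ∀ u, (stepProb α G u - stepProb α G' (β u)) * f (extendTree G u) =
        (stepProb α G u - stepProb α G' (β u)) * f (extendTree G w) := by
      intro u
      by_cases hu : u ∈ M
      · rw [h0 u hu, zero_mul, zero_mul]
      ·
        -- `f` takes the same value at all untracked attachment points
        rw [hf _ _ (h.extend (Or.inr ⟨hu, hw⟩)), h1]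
    simp only [h2]
    rw [← Finset.sum_mul, hs, zero_mul]
  · push Not at hM
    exact Finset.sum_eq_zero fun u _ => by rw [h0 u (hM u), zero_mul]

/-- The extension of a permutation of the seed by fixing the `m` added vertices. -/
def liftPerm {k : ℕ} (β : Equiv.Perm (Fin k)) : (m : ℕ) → Equiv.Perm (Fin (k + m))
  | 0 => β
  | m + 1 => succPerm (liftPerm β m)

/-- The tracked vertices after `m` steps: those of the seed lying in `M`, and all `m` added
vertices. -/
def liftSet {k : ℕ} (M : Set (Fin k)) : (m : ℕ) → Set (Fin (k + m))
  | 0 => M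
  | m + 1 => succSet (liftSet M m)

lemma liftPerm_castAdd {k : ℕ} (β : Equiv.Perm (Fin k)) (m : ℕ) (y : Fin k) :
    liftPerm β m (Fin.castAdd m y) = Fin.castAdd m (β y) := by
  induction m with
  | zero => rfl
  | succ m ih =>
    change succPerm (liftPerm β m) (Fin.castAdd m y).castSucc = _
    rw [succPerm_castSucc, ih]
    rfl

lemma liftPerm_symm {k : ℕ} (β : Equiv.Perm (Fin k)) (m : ℕ) :
    (liftPerm β m).symm = liftPerm β.symm m := by
  induction m with
  | zero => rfl
  | succ m ih =>
    change _ = succPerm (liftPerm β.symm m)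
    rw [← ih]
    rfl

lemma mem_liftSet {k : ℕ} {M : Set (Fin k)} {m : ℕ} {x : Fin (k + m)} :
    x ∈ liftSet M m ↔ ∀ y : Fin k, x = Fin.castAdd m y → y ∈ M := by
  induction m with
  | zero =>
    refine ⟨fun h y e => ?_, fun h => h x rfl⟩
    obtain rfl : x = y := e
    exact h
  | succ m ih =>
    change x ∈ succSet (liftSet M m) ↔ _
    refine Fin.lastCases ?_ (fun i => ?_) x
    · exact iff_of_true last_mem_succSet
        fun y hy => absurd hy (Fin.castSucc_lt_last (Fin.castAdd m y)).ne'
    · rw [castSucc_mem_succSet, ih]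
      exact forall_congr' fun y => imp_congr_left (Fin.castSucc_injective _).eq_iff.symm

/-- Functions that agree on matched graphs have the same expectation, for the chains started
from two matched seeds. -/
lemma integral_eq_of_matched {α : ℝ} (hα : 0 < α) {k : ℕ} (hk : 4 ≤ k)
    {S S' : SimpleGraph (Fin k)} {β : Equiv.Perm (Fin k)} {M : Set (Fin k)}
    (h : Matched β M S S') (m : ℕ) (f f' : SimpleGraph (Fin (k + m)) → ℝ)
    (hf : ∀ H H', Matched (liftPerm β m) (liftSet M m) H H' → f H = f' H') :
    ∫ G, f G ∂paLaw α S m = ∫ G, f' G ∂paLaw α S' m := by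
  induction m with
  | zero =>
    rw [integral_paLaw_zero, integral_paLaw_zero]
    exact hf _ _ h
  | succ m ih =>
    rw [integral_paLaw_succ, integral_paLaw_succ]
    exact ih _ _ fun H H' hH => Matched.step hα (hk.trans (Nat.le_add_right k m)) hf hH

/-! ### Graphs grown from the seed -/

/-- `G` contains `S` as the graph induced on the seed vertices, and two seed vertices that can be
joined inside a vertex set `B` of `G` can be joined inside the seed part of `B`. -/
structure Grown {k : ℕ} (S : SimpleGraph (Fin k)) (m : ℕ) (G : SimpleGraph (Fin (k + m))) :
    Prop where
  adj : ∀ a b : Fin k, G.Adj (Fin.castAdd m a) (Fin.castAdd m b) ↔ S.Adj a b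
  convex : ∀ (B : Set (Fin (k + m))) (x y : Fin k),
    Relation.ReflTransGen (fun a b => G.Adj a b ∧ a ∈ B ∧ b ∈ B)
      (Fin.castAdd m x) (Fin.castAdd m y) →
    Relation.ReflTransGen
      (fun a b => S.Adj a b ∧ Fin.castAdd m a ∈ B ∧ Fin.castAdd m b ∈ B) x y

/-- A path between old vertices need not use the new vertex, which is a leaf: replacing it by its
neighbour `u` turns a path starting at an old vertex into one among the old vertices. -/
lemma reflTransGen_of_extendTree {n : ℕ} {G : SimpleGraph (Fin n)} {u : Fin n}
    {B : Set (Fin (n + 1))} {x : Fin n} {z : Fin (n + 1)}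
    (h : Relation.ReflTransGen (fun a b => (extendTree G u).Adj a b ∧ a ∈ B ∧ b ∈ B)
      x.castSucc z) :
    Relation.ReflTransGen (fun a b : Fin n => G.Adj a b ∧ a.castSucc ∈ B ∧ b.castSucc ∈ B) x
      (Fin.lastCases (motive := fun _ => Fin n) u id z) := by
  induction h with
  | refl => simp only [Fin.lastCases_castSucc, id]; exact .refl
  | @tail b c _ hbc ih =>
    obtain ⟨hadj, hb, hc⟩ := hbc
    revert hadj hb hc ih
    refine Fin.lastCases ?_ (fun i => ?_) b <;> refine Fin.lastCases ?_ (fun j => ?_) c <;>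
      intro ih hadj hb hc
    · exact ih
    · rw [extendTree_last_castSucc] at hadj
      subst hadj
      simpa using ih
    · rw [extendTree_castSucc_last] at hadj
      subst hadj
      simpa using ih
    · rw [extendTree_castSucc_castSucc] at hadj
      simp only [Fin.lastCases_castSucc, id] at ih ⊢
      exact ih.tail ⟨hadj, hb, hc⟩

lemma Grown.extend {k : ℕ} {S : SimpleGraph (Fin k)} {m : ℕ} {G : SimpleGraph (Fin (k + m))}
    (h : Grown S m G) (u : Fin (k + m)) : Grown S (m + 1) (extendTree G u) where
  adj a b := (extendTree_castSucc_castSucc G u _ _).trans (h.adj a b)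
  convex B x y hxy := by
    have h1 := reflTransGen_of_extendTree (x := Fin.castAdd m x) hxy
    change Relation.ReflTransGen _ _ (Fin.lastCases (motive := fun _ => Fin (k + m)) u id
      (Fin.castAdd m y).castSucc) at h1
    rw [Fin.lastCases_castSucc] at h1
    exact h.convex (Fin.castSucc ⁻¹' B) x y h1

lemma Grown.refl {k : ℕ} (S : SimpleGraph (Fin k)) : Grown S 0 S where
  adj _ _ := Iff.rfl
  convex _ _ _ h := h

lemma integral_congr_grown (α : ℝ) {k : ℕ} (S : SimpleGraph (Fin k)) (m : ℕ)
    (f g : SimpleGraph (Fin (k + m)) → ℝ) (hfg : ∀ G, Grown S m G → f G = g G) :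
    ∫ G, f G ∂paLaw α S m = ∫ G, g G ∂paLaw α S m := by
  induction m with
  | zero =>
    rw [integral_paLaw_zero, integral_paLaw_zero]
    exact hfg _ (Grown.refl S)
  | succ m ih =>
    rw [integral_paLaw_succ, integral_paLaw_succ]
    exact ih _ _ fun G hG => Finset.sum_congr rfl fun u _ => by rw [hfg _ (hG.extend u)]

/-! ### Decomposition of the observable by the trace on the seed -/

instance {V W : Type*} [Finite V] [Finite W] (τ : SimpleGraph V) (G : SimpleGraph W) :
    Fintype (τ ↪g G) :=
  @Fintype.ofFinite _ (Finite.of_injective _ (DFunLike.coe_injective (F := τ ↪g G)))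

/-- The set of vertices of `τ` sent into the seed by `φ` is `A`. -/
def HasTrace {k m r : ℕ} {τ : SimpleGraph (Fin r)} {G : SimpleGraph (Fin (k + m))}
    (A : Finset (Fin r)) (φ : τ ↪g G) : Prop :=
  ∀ u, (∃ y : Fin k, φ u = Fin.castAdd m y) ↔ u ∈ A

open Classical in
/-- The contribution to `F_τ` of the embeddings with trace `A` on the seed. -/
def obsTrace (k m : ℕ) {r : ℕ} (τ : SimpleGraph (Fin r)) (ℓ : Fin r → ℕ) (A : Finset (Fin r))
    (G : SimpleGraph (Fin (k + m))) : ℝ :=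
  ∑ φ : τ ↪g G, if HasTrace A φ then embWeight G ℓ ⇑φ else 0

open Classical in
/-- The contribution to `F_τ` of the embeddings with trace `A` on the seed and whose restriction
to `A` is `p`. -/
def obsExt (m : ℕ) {k r : ℕ} (τ : SimpleGraph (Fin r)) (ℓ : Fin r → ℕ) (A : Finset (Fin r))
    (p : (↑A : Set (Fin r)) → Fin k) (G : SimpleGraph (Fin (k + m))) : ℝ :=
  ∑ φ : τ ↪g G, if HasTrace A φ ∧ ∀ a : (↑A : Set (Fin r)), φ a = Fin.castAdd m (p a) then
    embWeight G ℓ ⇑φ else 0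

section Decomposition

variable {k m r : ℕ} {τ : SimpleGraph (Fin r)} {ℓ : Fin r → ℕ}

lemma obsG_eq_sum_obsTrace (G : SimpleGraph (Fin (k + m))) :
    obsG τ ℓ G = ∑ A : Finset (Fin r), obsTrace k m τ ℓ A G := by
  classical
  simp only [obsG, obsTrace]
  rw [finsum_eq_sum_of_fintype, Finset.sum_comm]
  refine Finset.sum_congr rfl fun φ _ => ?_
  rw [Finset.sum_eq_single (Finset.univ.filter fun u => ∃ y : Fin k, φ u = Fin.castAdd m y)]
  · rw [if_pos]
    intro u
    simp
  · intro A _ hA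
    refine if_neg fun h => hA ?_
    ext u
    simpa using (h u).symm
  · exact fun h => absurd (Finset.mem_univ _) h

lemma obsTrace_univ {S : SimpleGraph (Fin k)} {G : SimpleGraph (Fin (k + m))}
    (hG : Grown S m G) : obsTrace k m τ ℓ Finset.univ G = obsInSeed k m τ ℓ S G := by
  classical
  rw [obsTrace, obsInSeed, finsum_eq_sum_of_fintype, ← Finset.sum_filter]
  symm
  refine Finset.sum_bij (fun ψ _ => (⟨⟨fun u => Fin.castAdd m (ψ u), fun a b hab =>
      ψ.injective (Fin.castAdd_injective _ _ hab)⟩, fun {a b} =>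
      (hG.adj _ _).trans ψ.map_adj_iff⟩ : τ ↪g G)) ?_ ?_ ?_ ?_
  · intro ψ _
    simp only [Finset.mem_filter, Finset.mem_univ, true_and]
    exact fun u => iff_of_true ⟨ψ u, rfl⟩ (Finset.mem_univ _)
  · intro ψ _ ψ' _ h
    ext u
    have := congrArg Fin.val (DFunLike.congr_fun h u)
    exact this
  · intro φ hφ
    simp only [Finset.mem_filter, Finset.mem_univ, true_and] at hφ
    choose y hy using fun u => (hφ u).2 (Finset.mem_univ _)
    refine ⟨⟨⟨y, fun a b hab => φ.injective (by rw [hy, hy, hab])⟩, fun {a b} => ?_⟩,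
      Finset.mem_univ _, ?_⟩
    · change S.Adj (y a) (y b) ↔ _
      rw [← hG.adj, ← hy, ← hy, φ.map_adj_iff]
    · ext u
      exact congrArg Fin.val (hy u).symm
  · intro ψ _
    rfl

lemma obsTrace_eq_sum_obsExt {S : SimpleGraph (Fin k)} {G : SimpleGraph (Fin (k + m))}
    (hG : Grown S m G) (A : Finset (Fin r)) :
    obsTrace k m τ ℓ A G =
      ∑ ψ : τ.induce (↑A : Set (Fin r)) ↪g S, obsExt m τ ℓ A ⇑ψ G := by
  classical
  simp only [obsExt, obsTrace]
  rw [Finset.sum_comm]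
  refine Finset.sum_congr rfl fun φ _ => ?_
  by_cases hφ : HasTrace A φ
  · choose y hy using fun u : (↑A : Set (Fin r)) => (hφ u).2 u.2
    rw [if_pos hφ]
    let ψ₀ : τ.induce (↑A : Set (Fin r)) ↪g S :=
      ⟨⟨y, fun a b hab => Subtype.ext (φ.injective (by rw [hy, hy, hab]))⟩, fun {a b} => by
        change S.Adj (y a) (y b) ↔ _
        rw [← hG.adj, ← hy, ← hy, φ.map_adj_iff]
        rfl⟩
    rw [Finset.sum_eq_single ψ₀, if_pos ⟨hφ, hy⟩]
    · intro ψ _ hψ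
      refine if_neg fun h => hψ ?_
      ext a
      exact congrArg Fin.val
        (Fin.castAdd_injective _ m ((h.2 a).symm.trans (hy a)) : ψ a = ψ₀ a)
    · exact fun h => absurd (Finset.mem_univ _) h
  · rw [if_neg hφ]
    exact (Finset.sum_eq_zero fun ψ _ => if_neg fun h => hφ h.1).symm

/-- An embedding with trace `A` takes its values in the tracked set when the seed part of
that set is the image of `A`. -/
lemma HasTrace.mem_liftSet {G : SimpleGraph (Fin (k + m))} {A : Finset (Fin r)} {φ : τ ↪g G}
    (h : HasTrace A φ) {p : (↑A : Set (Fin r)) → Fin k}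
    (hp : ∀ a : (↑A : Set (Fin r)), φ a = Fin.castAdd m (p a)) (u : Fin r) :
    φ u ∈ liftSet (Set.range p) m := by
  rw [AffinePA.mem_liftSet]
  intro y hy
  have hu : u ∈ A := (h u).1 ⟨y, hy⟩
  exact ⟨⟨u, hu⟩, Fin.castAdd_injective _ _ ((hp ⟨u, hu⟩).symm.trans hy)⟩

/-- The image under `β` of an embedding into the tracked vertices of a graph. -/
def Matched.map {n : ℕ} {β : Equiv.Perm (Fin n)} {M : Set (Fin n)} {G G' : SimpleGraph (Fin n)}
    (h : Matched β M G G') (φ : τ ↪g G) (hφ : ∀ u, φ u ∈ M) : τ ↪g G' :=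
  ⟨⟨fun u => β (φ u), β.injective.comp φ.injective⟩, fun {a b} =>
    (h.adj _ (hφ a) _ (hφ b)).trans φ.map_adj_iff⟩

lemma obsExt_eq_of_matched {β : Equiv.Perm (Fin k)} {A : Finset (Fin r)}
    {p p' : (↑A : Set (Fin r)) → Fin k} (hp : ∀ a, β (p a) = p' a)
    {G G' : SimpleGraph (Fin (k + m))}
    (h : Matched (liftPerm β m) (liftSet (Set.range p) m) G G') :
    obsExt m τ ℓ A p G = obsExt m τ ℓ A p' G' := by
  classical
  have trace_iff : ∀ x, (∃ y, liftPerm β m x = Fin.castAdd m y) ↔ ∃ y, x = Fin.castAdd m y := by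
    intro x
    constructor
    · rintro ⟨y, hy⟩
      exact ⟨β.symm y, (liftPerm β m).injective (by rw [hy, liftPerm_castAdd, β.apply_symm_apply])⟩
    · rintro ⟨y, rfl⟩
      exact ⟨_, liftPerm_castAdd β m y⟩
  rw [obsExt, obsExt, ← Finset.sum_filter, ← Finset.sum_filter]
  have mem : ∀ φ ∈ (Finset.univ : Finset (τ ↪g G)).filter (fun φ => HasTrace A φ ∧
      ∀ a : (↑A : Set (Fin r)), φ a = Fin.castAdd m (p a)),
      ∀ u, φ u ∈ liftSet (Set.range p) m := by
    intro φ hφ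
    rw [Finset.mem_filter] at hφ
    exact hφ.2.1.mem_liftSet hφ.2.2
  refine Finset.sum_bij (fun φ hφ => h.map φ (mem φ hφ)) ?_ ?_ ?_ ?_
  · intro φ hφ
    rw [Finset.mem_filter] at hφ ⊢
    refine ⟨Finset.mem_univ _, fun u => (trace_iff _).trans (hφ.2.1 u), fun a => ?_⟩
    change liftPerm β m (φ a) = _
    rw [hφ.2.2 a, liftPerm_castAdd, hp]
  · intro φ hφ φ' hφ' e
    refine DFunLike.ext _ _ fun u => (liftPerm β m).injective (DFunLike.congr_fun e u)
  · intro φ' hφ'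
    rw [Finset.mem_filter] at hφ'
    have hM : ∀ u, φ' u ∈ liftPerm β m '' liftSet (Set.range p) m := by
      intro u
      refine ⟨(liftPerm β m).symm (φ' u), ?_, Equiv.apply_symm_apply _ _⟩
      rw [mem_liftSet]
      intro y hy
      have hy' : φ' u = Fin.castAdd m (β y) := by
        rw [← liftPerm_castAdd, ← hy, Equiv.apply_symm_apply]
      have hu : u ∈ A := (hφ'.2.1 u).1 ⟨_, hy'⟩
      refine ⟨⟨u, hu⟩, β.injective (Fin.castAdd_injective _ m ?_)⟩
      rw [← hy', hp]
      exact (hφ'.2.2 ⟨u, hu⟩).symm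
    refine ⟨h.symm.map φ' hM, ?_, ?_⟩
    · rw [Finset.mem_filter]
      refine ⟨Finset.mem_univ _, fun u => ?_, fun a => (liftPerm β m).injective ?_⟩
      · rw [← trace_iff]
        change (∃ y, liftPerm β m ((liftPerm β m).symm (φ' u)) = _) ↔ _
        rw [Equiv.apply_symm_apply]
        exact hφ'.2.1 u
      · change liftPerm β m ((liftPerm β m).symm (φ' a)) = _
        rw [Equiv.apply_symm_apply, liftPerm_castAdd, hp]
        exact hφ'.2.2 a
    · refine DFunLike.ext _ _ fun u => ?_
      change liftPerm β m ((liftPerm β m).symm (φ' u)) = _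
      rw [Equiv.apply_symm_apply]
  · intro φ hφ
    refine Finset.prod_congr rfl fun u _ => ?_
    change _ = (((degR G' (liftPerm β m (φ u)) - 1).descFactorial (ℓ u) : ℕ) : ℝ)
    rw [h.deg _ (mem φ hφ u)]

/-- A nonempty trace on the seed of an embedded tree is a subtree, because the seed is convex. -/
lemma HasTrace.isTree (hτ : τ.IsTree) {S : SimpleGraph (Fin k)} {G : SimpleGraph (Fin (k + m))}
    (hG : Grown S m G) {A : Finset (Fin r)} (hA : A.Nonempty) {φ : τ ↪g G}
    (h : HasTrace A φ) : (τ.induce (↑A : Set (Fin r))).IsTree := by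
  have : Nonempty (↑A : Set (Fin r)) := hA.to_subtype
  refine ⟨⟨fun a b => ?_⟩, hτ.isAcyclic.induce _⟩
  choose y hy using fun u : (↑A : Set (Fin r)) => (h u).2 u.2
  have h1 : Relation.ReflTransGen
      (fun x z => G.Adj x z ∧ x ∈ Set.range φ ∧ z ∈ Set.range φ) (φ a) (φ b) := by
    have h2 := (SimpleGraph.reachable_iff_reflTransGen _ _).1
      (hτ.connected.preconnected (a : Fin r) b)
    exact h2.lift φ fun u v huv => ⟨φ.map_adj_iff.2 huv, ⟨u, rfl⟩, ⟨v, rfl⟩⟩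
  rw [hy, hy] at h1
  have h3 := hG.convex _ _ _ h1
  have key : ∀ z, Relation.ReflTransGen (fun x z => S.Adj x z ∧
      Fin.castAdd m x ∈ Set.range φ ∧ Fin.castAdd m z ∈ Set.range φ) (y a) z →
      ∃ c, y c = z ∧ (τ.induce (↑A : Set (Fin r))).Reachable a c := by
    intro z hz
    induction hz with
    | refl => exact ⟨a, rfl, .rfl⟩
    | @tail x z _ hxz ih =>
      obtain ⟨c, rfl, hc⟩ := ih
      obtain ⟨hadj, -, v, hv⟩ := hxz
      have hvA : v ∈ A := (h v).1 ⟨z, hv⟩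
      have hz : y ⟨v, hvA⟩ = z := Fin.castAdd_injective _ m ((hy ⟨v, hvA⟩).symm.trans hv)
      refine ⟨⟨v, hvA⟩, hz, hc.trans (SimpleGraph.Adj.reachable ?_)⟩
      change τ.Adj c v
      rw [← φ.map_adj_iff, hy c, hv, hG.adj]
      exact hadj
  obtain ⟨c, hc, hac⟩ := key _ h3
  have : c = b := Subtype.ext (φ.injective (by rw [hy, hy, hc]))
  exact this ▸ hac

end Decomposition

/-! ### Blindness and the conclusion -/

lemma one_le_degR_of_isTree {k : ℕ} (hk : 4 ≤ k) {S : SimpleGraph (Fin k)} (hS : S.IsTree)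
    (x : Fin k) : 1 ≤ degR S x := by
  classical
  have : Nontrivial (Fin k) := Fin.nontrivial_iff_two_le.2 (by omega)
  rw [degR_eq_degree]
  exact hS.connected.preconnected.degree_pos_of_nontrivial x

lemma sum_degR_of_isTree {k : ℕ} {S : SimpleGraph (Fin k)} (hS : S.IsTree) :
    ∑ x, degR S x = 2 * (k - 1) := by
  classical
  simp only [degR_eq_degree]
  rw [SimpleGraph.sum_degrees_eq_twice_card_edges]
  have := hS.card_edgeFinset
  rw [Fintype.card_fin] at this
  omega

/-- Blindness provides a degree-preserving bijection between the embeddings in two trees. -/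
lemma exists_equiv_of_isBlind {V : Type*} [Finite V] {σ : SimpleGraph V} {k : ℕ} (hk : 4 ≤ k)
    {S S' : SimpleGraph (Fin k)} (hS : S.IsTree) (hS' : S'.IsTree) (h : IsBlind σ S S') :
    ∃ e : (σ ↪g S) ≃ (σ ↪g S'), ∀ ψ u, degR S' (e ψ u) = degR S (ψ u) := by
  have hcard : ∀ d : V → ℕ, perfCount σ d S = perfCount σ d S' := by
    intro d
    by_cases hd : ∀ u, 1 ≤ d u
    · exact h d hd
    ·
      -- no vertex of a tree on at least two vertices has degree `0`
      push Not at hd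
      obtain ⟨u, hu⟩ := hd
      have e1 : IsEmpty {φ : σ ↪g S // ∀ u, degR S (φ u) = d u} := ⟨fun φ => by
        have := one_le_degR_of_isTree hk hS (φ.1 u)
        have := φ.2 u
        omega⟩
      have e2 : IsEmpty {φ : σ ↪g S' // ∀ u, degR S' (φ u) = d u} := ⟨fun φ => by
        have := one_le_degR_of_isTree hk hS' (φ.1 u)
        have := φ.2 u
        omega⟩
      rw [perfCount, perfCount, Nat.card_of_isEmpty, Nat.card_of_isEmpty]
  have hfib : ∀ d : V → ℕ, Nonempty ({φ : σ ↪g S // (fun u => degR S (φ u)) = d} ≃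
      {φ : σ ↪g S' // (fun u => degR S' (φ u)) = d}) := by
    intro d
    have := hcard d
    simp only [perfCount, ← funext_iff (g := d)] at this
    exact Finite.card_eq.1 this
  let e := fun d => Classical.choice (hfib d)
  exact ⟨Equiv.ofFiberEquiv e, fun ψ u => congrFun (Equiv.ofFiberEquiv_map e ψ) u⟩

lemma exists_perm_comp_eq {ι : Type*} {k : ℕ} {p p' : ι → Fin k} (hp : p.Injective)
    (hp' : p'.Injective) : ∃ β : Equiv.Perm (Fin k), ∀ a, β (p a) = p' a := by
  classical
  let e : {x // x ∈ Set.range p} ≃ {x // x ∈ Set.range p'} :=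
    (Equiv.ofInjective p hp).symm.trans (Equiv.ofInjective p' hp')
  refine ⟨e.extendSubtype, fun a => ?_⟩
  rw [Equiv.extendSubtype_apply_of_mem e _ ⟨a, rfl⟩]
  have : (Equiv.ofInjective p hp).symm ⟨p a, ⟨a, rfl⟩⟩ = a := Equiv.ofInjective_symm_apply hp a
  simp only [e, Equiv.trans_apply, this, Equiv.ofInjective_apply]

/-- The embeddings whose trace on the seed is a given `(S,S')`-blind subgraph have the same
expected contribution for both seeds. -/
lemma integral_obsTrace_eq_of_isBlind {α : ℝ} (hα : 0 < α) {k : ℕ} (hk : 4 ≤ k)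
    {S S' : SimpleGraph (Fin k)} (hS : S.IsTree) (hS' : S'.IsTree) {r : ℕ}
    {τ : SimpleGraph (Fin r)} {A : Finset (Fin r)}
    (h : IsBlind (τ.induce (↑A : Set (Fin r))) S S') (ℓ : Fin r → ℕ) (m : ℕ) :
    ∫ G, obsTrace k m τ ℓ A G ∂paLaw α S m = ∫ G, obsTrace k m τ ℓ A G ∂paLaw α S' m := by
  obtain ⟨e, he⟩ := exists_equiv_of_isBlind hk hS hS' h
  rw [integral_congr_grown α S m _ _ fun G hG => obsTrace_eq_sum_obsExt hG A,
    integral_congr_grown α S' m _ _ fun G hG => obsTrace_eq_sum_obsExt hG A,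
    integral_finsetSum _ fun _ _ => Integrable.of_finite,
    integral_finsetSum _ fun _ _ => Integrable.of_finite, ← Equiv.sum_comp e]
  refine Finset.sum_congr rfl fun ψ _ => ?_
  obtain ⟨β, hβ⟩ := exists_perm_comp_eq ψ.injective (e ψ).injective
  have hM : Matched β (Set.range ψ) S S' := by
    refine ⟨?_, ?_, ?_, one_le_degR_of_isTree hk hS, one_le_degR_of_isTree hk hS'⟩
    · rintro _ ⟨a, rfl⟩ _ ⟨b, rfl⟩
      rw [hβ, hβ, SimpleGraph.Embedding.map_adj_iff, SimpleGraph.Embedding.map_adj_iff]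
    · rintro _ ⟨a, rfl⟩
      rw [hβ, he]
    · rw [sum_degR_of_isTree hS, sum_degR_of_isTree hS']
  exact integral_eq_of_matched hα hk hM m _ _ fun H H' hH => obsExt_eq_of_matched hβ hH

lemma isBlind_of_isEmpty {V W : Type*} [IsEmpty V] (σ : SimpleGraph V) (S S' : SimpleGraph W) :
    IsBlind σ S S' := by
  intro d _
  have key : ∀ H : SimpleGraph W, perfCount σ d H = 1 := by
    intro H
    rw [perfCount, Nat.card_eq_one_iff_unique]
    exact ⟨⟨fun f g => Subtype.ext (DFunLike.ext _ _ isEmptyElim)⟩,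
      ⟨⟨⟨⟨isEmptyElim, fun a => isEmptyElim a⟩, fun {a} => isEmptyElim a⟩, isEmptyElim⟩⟩⟩
  exact (key S).trans (key S').symm

/-- **Corollary 4.6.** Let `S, S'` be two distinct (non-isomorphic) seeds of
the same size `k ≥ 4` and `τ` a minimal tree that is not `(S,S')`-blind. Then for every
decoration `ℓ` of `τ` and every `n = k + m ≥ k`, the difference of the expectations of
`F_τ` equals the difference of the expected contributions of embeddings into the seed. -/
theorem difference_only_in_seed (α : ℝ) (hα : 0 < α) (k : ℕ) (hk : 4 ≤ k)
    (S S' : SimpleGraph (Fin k)) (hS : S.IsTree) (hS' : S'.IsTree)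
    (hne : ¬ Nonempty (S ≃g S'))
    (r : ℕ) (τ : SimpleGraph (Fin r)) (hτ : τ.IsTree)
    (hnotblind : ¬ IsBlind τ S S')
    (hmin : ∀ A : Finset (Fin r), A.Nonempty → A ≠ Finset.univ →
      (τ.induce (↑A : Set (Fin r))).IsTree → IsBlind (τ.induce (↑A : Set (Fin r))) S S')
    (ℓ : Fin r → ℕ) (m : ℕ) :
    (∫ G, obsG τ ℓ G ∂paLaw α S m) - (∫ G, obsG τ ℓ G ∂paLaw α S' m) =
      (∫ G, obsInSeed k m τ ℓ S G ∂paLaw α S m) -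
        ∫ G, obsInSeed k m τ ℓ S' G ∂paLaw α S' m := by
  classical
  have hsplit : ∀ Q : SimpleGraph (Fin k), ∫ G, obsG τ ℓ G ∂paLaw α Q m =
      ∫ G, obsInSeed k m τ ℓ Q G ∂paLaw α Q m +
        ∑ A ∈ Finset.univ.erase (Finset.univ : Finset (Fin r)),
          ∫ G, obsTrace k m τ ℓ A G ∂paLaw α Q m := by
    intro Q
    simp only [obsG_eq_sum_obsTrace]
    rw [integral_finsetSum _ fun _ _ => Integrable.of_finite,
      ← Finset.add_sum_erase _ _ (Finset.mem_univ Finset.univ),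
      integral_congr_grown α Q m _ _ fun G hG => obsTrace_univ hG]
  have hA : ∀ A ∈ Finset.univ.erase (Finset.univ : Finset (Fin r)),
      ∫ G, obsTrace k m τ ℓ A G ∂paLaw α S m = ∫ G, obsTrace k m τ ℓ A G ∂paLaw α S' m := by
    intro A hA
    rcases A.eq_empty_or_nonempty with rfl | hne
    · have : IsEmpty (↑(∅ : Finset (Fin r)) : Set (Fin r)) := by simp
      exact integral_obsTrace_eq_of_isBlind hα hk hS hS' (isBlind_of_isEmpty _ _ _) ℓ m
    by_cases ht : (τ.induce (↑A : Set (Fin r))).IsTree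
    · exact integral_obsTrace_eq_of_isBlind hα hk hS hS'
        (hmin A hne (Finset.ne_of_mem_erase hA) ht) ℓ m
    · have h0 : ∀ Q : SimpleGraph (Fin k), ∫ G, obsTrace k m τ ℓ A G ∂paLaw α Q m = 0 := by
        intro Q
        have hz : ∀ G, Grown Q m G → obsTrace k m τ ℓ A G = 0 := fun G hG =>
          Finset.sum_eq_zero fun φ _ => if_neg fun h => ht (HasTrace.isTree hτ hG hne h)
        rw [integral_congr_grown α Q m _ _ hz, integral_zero]
      rw [h0, h0]
  rw [hsplit S, hsplit S', Finset.sum_congr rfl hA]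
  ring

end AffinePA
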